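/- arXiv:2002.04149 — 2 statements merged into one kernel-verified Lean document; each statement's English description precedes it below -/
import Mathlib

section
/- Let V ∈ ℂ^{n×n} have columns v_1,…,v_n, let P = UU† be Hermitian PSD of rank r with Tr(P) = n and U ∈ ℂ^{n×r}, and let z ~ 𝒞𝒩(0, I_r). Define y = √n · Uz/‖Uz‖ (almost surely well-defined). Then E_z[∏_{i=1}^n |⟨v_i, y⟩|²] ≥ e^{−n·L_r} · ∏_{i=1}^n v_i† P v_i, where L_r = H_{r−1} − log r. -/
open MeasureTheory ProbabilityTheory Matrix Finset Real ComplexOrder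

/-- The standard circularly-symmetric complex Gaussian: real and imaginary parts
are i.i.d. `N(0, 1/2)`. -/
noncomputable def stdCGaussian : Measure ℂ :=
  ((gaussianReal 0 (1/2)).prod (gaussianReal 0 (1/2))).map
    (fun p => (p.1 : ℂ) + p.2 * Complex.I)

/-- The law of a vector of `n` i.i.d. standard circularly-symmetric complex Gaussians. -/
noncomputable def stdCGaussianVec (n : ℕ) : Measure (Fin n → ℂ) :=
  Measure.pi fun _ => stdCGaussian

/-!
By Jensen's inequality for `exp`, it is enough to bound `E log |⟨v, y⟩|²` below for a single
vector `v`, where `log |⟨v, y⟩|² = log t - log ‖Uz‖² + log |⟨v, Uz⟩|²` and `t = tr (U Uᴴ)`.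
The variable `⟨v, Uz⟩` is a centred complex Gaussian of variance `vᴴ U Uᴴ v`, so its squared modulus
is exponential and `E log |⟨v, Uz⟩|² = log (vᴴ U Uᴴ v) - γ`.  For the other term write
`‖Uz‖² = ‖z‖² · (‖Uz‖² / ‖z‖²)`.  Here `‖z‖²` is Gamma distributed with shape `r`, and
`E log ‖z‖² = H_{r-1} - γ`.  The ratio is `tr (Uᴴ U Π)` for the projection `Π` onto the line
through `z`; invariance under sign changes and permutations of the coordinates gives `E Π = I / r`,
and Jensen's inequality again bounds the expected logarithm of the ratio by `log (t / r)`.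
-/

lemma sum_norm_sq_pos_iff {ι E : Type*} [Fintype ι] [NormedAddCommGroup E] {x : ι → E} :
    0 < ∑ i, ‖x i‖ ^ 2 ↔ x ≠ 0 := by
  rw [(Finset.sum_nonneg fun i _ => sq_nonneg ‖x i‖).lt_iff_ne', Ne,
    Finset.sum_eq_zero_iff_of_nonneg fun i _ => sq_nonneg ‖x i‖, ← not_iff_not, not_not, not_not]
  simp [funext_iff]

lemma star_dotProduct_self_eq_sum_norm_sq {𝕜 ι : Type*} [RCLike 𝕜] [Fintype ι] (x : ι → 𝕜) :
    star x ⬝ᵥ x = ((∑ i, ‖x i‖ ^ 2 : ℝ) : 𝕜) := by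
  simp [dotProduct, RCLike.conj_mul]

lemma norm_star_dotProduct_sq_le {𝕜 ι : Type*} [RCLike 𝕜] [Fintype ι] (x y : ι → 𝕜) :
    ‖star x ⬝ᵥ y‖ ^ 2 ≤ (∑ i, ‖x i‖ ^ 2) * ∑ i, ‖y i‖ ^ 2 := by
  have hinner := norm_inner_le_norm (𝕜 := 𝕜) (WithLp.toLp 2 x) (WithLp.toLp 2 y)
  rw [EuclideanSpace.inner_toLp_toLp, dotProduct_comm] at hinner
  simpa only [mul_pow, EuclideanSpace.norm_sq_eq] using pow_le_pow_left₀ (norm_nonneg _) hinner 2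

lemma star_dotProduct_mul_conjTranspose_mulVec {𝕜 κ ρ : Type*} [RCLike 𝕜] [Fintype κ] [Fintype ρ]
    (U : Matrix κ ρ 𝕜) (v : κ → 𝕜) :
    star v ⬝ᵥ (U * Uᴴ) *ᵥ v = ((∑ k, ‖(star v ᵥ* U) k‖ ^ 2 : ℝ) : 𝕜) := by
  rw [← mulVec_mulVec, dotProduct_mulVec, dotProduct_comm, ← star_star (Uᴴ *ᵥ v), star_mulVec,
    conjTranspose_conjTranspose, star_dotProduct_self_eq_sum_norm_sq]

section Rescale

variable {𝕜 κ : Type*} [RCLike 𝕜] [Fintype κ] {t : ℝ}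

/-- The nonnegative multiple of `y` whose squared Euclidean norm is `t`; it encodes `√t · y / ‖y‖`
on `κ → 𝕜`, which carries the sup norm. At `y = 0` it is `0`. -/
noncomputable def rescale (t : ℝ) (y : κ → 𝕜) : κ → 𝕜 :=
  (√t / √(∑ j, ‖y j‖ ^ 2)) • y

lemma norm_sq_dotProduct_rescale (ht : 0 ≤ t) (x y : κ → 𝕜) :
    ‖x ⬝ᵥ rescale t y‖ ^ 2 = t / (∑ j, ‖y j‖ ^ 2) * ‖x ⬝ᵥ y‖ ^ 2 := by
  rw [rescale, dotProduct_smul, norm_smul, mul_pow, norm_eq_abs, sq_abs, div_pow, sq_sqrt ht,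
    sq_sqrt (by positivity)]

lemma norm_sq_star_dotProduct_rescale_le (ht : 0 ≤ t) (x y : κ → 𝕜) :
    ‖star x ⬝ᵥ rescale t y‖ ^ 2 ≤ t * ∑ j, ‖x j‖ ^ 2 := by
  rw [norm_sq_dotProduct_rescale ht, div_mul_eq_mul_div]
  refine div_le_of_le_mul₀ (by positivity) (by positivity) ?_
  rw [mul_assoc]
  gcongr
  exact norm_star_dotProduct_sq_le x y

lemma integrable_prod_norm_sq_star_dotProduct_rescale {ι ρ : Type*} [Fintype ι] [Fintype ρ]
    (μ : Measure (ρ → 𝕜)) [IsFiniteMeasure μ] (ht : 0 ≤ t) (v : ι → κ → 𝕜) (U : Matrix κ ρ 𝕜) :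
    Integrable (fun z => ∏ i, ‖star (v i) ⬝ᵥ rescale t (U *ᵥ z)‖ ^ 2) μ := by
  have hmeas : Measurable fun z => ∏ i, ‖star (v i) ⬝ᵥ rescale t (U *ᵥ z)‖ ^ 2 := by
    simp only [rescale, mulVec]
    fun_prop
  refine .of_bound hmeas.aestronglyMeasurable (∏ i, t * ∑ j, ‖v i j‖ ^ 2)
    (ae_of_all _ fun z => ?_)
  rw [norm_of_nonneg (by positivity)]
  exact prod_le_prod (fun _ _ => by positivity) fun i _ =>
    norm_sq_star_dotProduct_rescale_le ht (v i) (U *ᵥ z)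

end Rescale

section Jensen

variable {Ω : Type*} [MeasurableSpace Ω] {μ : Measure Ω} [IsProbabilityMeasure μ]

lemma exp_integral_log_le_integral {X : Ω → ℝ} (hX : Integrable X μ)
    (hlog : Integrable (fun ω => log (X ω)) μ) (hpos : ∀ᵐ ω ∂μ, 0 < X ω) :
    exp (∫ ω, log (X ω) ∂μ) ≤ ∫ ω, X ω ∂μ := by
  have hexp : (fun ω => exp (log (X ω))) =ᵐ[μ] X := by
    filter_upwards [hpos] with ω hω using exp_log hω
  rw [← integral_congr_ae hexp]
  exact convexOn_exp.map_integral_le continuous_exp.continuousOn isClosed_univ (by simp) hlog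
    (hX.congr hexp.symm)

lemma exp_sum_integral_log_le_integral_prod {ι : Type*} [Fintype ι] {X : ι → Ω → ℝ}
    (hX : Integrable (fun ω => ∏ i, X i ω) μ)
    (hlog : ∀ i, Integrable (fun ω => log (X i ω)) μ) (hpos : ∀ i, ∀ᵐ ω ∂μ, 0 < X i ω) :
    exp (∑ i, ∫ ω, log (X i ω) ∂μ) ≤ ∫ ω, ∏ i, X i ω ∂μ := by
  have hpos := ae_all_iff.2 hpos
  have hsum : (fun ω => ∑ i, log (X i ω)) =ᵐ[μ] fun ω => log (∏ i, X i ω) := by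
    filter_upwards [hpos] with ω hω
    exact (log_prod fun i _ => (hω i).ne').symm
  rw [← integral_finsetSum _ fun i _ => hlog i, integral_congr_ae hsum]
  refine exp_integral_log_le_integral hX ((integrable_finsetSum _ fun i _ => hlog i).congr hsum) ?_
  filter_upwards [hpos] with ω hω using prod_pos fun i _ => hω i

end Jensen

section Gamma

variable {E : Type*} [NormedAddCommGroup E] [NormedSpace ℝ E] {a r : ℝ}

lemma integral_gammaMeasure (ha : 0 < a) (hr : 0 < r) (f : ℝ → E) :
    ∫ x, f x ∂gammaMeasure a r =
      (r ^ a / Gamma a) • ∫ x in Set.Ioi 0, (x ^ (a - 1) * exp (-(r * x))) • f x := by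
  have hpdf : ∀ x ∉ Set.Ici (0 : ℝ), (gammaPDF a r x).toReal • f x = 0 := fun x hx => by
    rw [gammaPDF_of_neg (not_le.mp hx), ENNReal.toReal_zero, zero_smul]
  have hmeas : Measurable (gammaPDF a r) := (measurable_gammaPDFReal a r).ennreal_ofReal
  rw [gammaMeasure, integral_withDensity_eq_integral_toReal_smul hmeas
      (ae_of_all _ fun _ => ENNReal.ofReal_lt_top),
    ← setIntegral_eq_integral_of_forall_compl_eq_zero hpdf, integral_Ici_eq_integral_Ioi,
    ← integral_smul]
  refine setIntegral_congr_fun measurableSet_Ioi fun x hx => ?_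
  have hx : 0 < x := hx
  rw [gammaPDF_of_nonneg hx.le, ENNReal.toReal_ofReal (by positivity), smul_smul, mul_assoc]

lemma mgf_id_gammaMeasure (ha : 0 < a) (hr : 0 < r) {t : ℝ} (ht : t < r) :
    mgf id (gammaMeasure a r) t = (1 - t / r) ^ (-a) := by
  have hrt : 0 < r - t := sub_pos.mpr ht
  calc mgf id (gammaMeasure a r) t
      = r ^ a / Gamma a * ∫ x in Set.Ioi 0, x ^ (a - 1) * exp (-((r - t) * x)) := by
        rw [mgf, integral_gammaMeasure ha hr, smul_eq_mul]
        congr 2 with x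
        rw [smul_eq_mul, mul_assoc, ← exp_add, id]
        ring_nf
    _ = r ^ a * (1 / (r - t)) ^ a := by
        rw [integral_rpow_mul_exp_neg_mul_Ioi ha hrt]
        field_simp [(Gamma_pos_of_pos ha).ne']
    _ = (1 - t / r) ^ (-a) := by
        rw [← mul_rpow hr.le (by positivity), rpow_neg_eq_inv_rpow, one_sub_div hr.ne', inv_div,
          mul_one_div]

lemma mgf_log_gammaMeasure (ha : 0 < a) (hr : 0 < r) {s : ℝ} (hs : -a < s) :
    mgf log (gammaMeasure a r) s = Gamma (a + s) / Gamma a * r ^ (-s) := by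
  have has : 0 < a + s := by linarith
  calc mgf log (gammaMeasure a r) s
      = r ^ a / Gamma a * ∫ x in Set.Ioi 0, x ^ (a + s - 1) * exp (-(r * x)) := by
        rw [mgf, integral_gammaMeasure ha hr, smul_eq_mul]
        congr 1
        refine setIntegral_congr_fun measurableSet_Ioi fun x hx => ?_
        have hx : 0 < x := hx
        simp only [smul_eq_mul]
        rw [mul_comm s, ← rpow_def_of_pos hx, mul_right_comm, ← rpow_add hx, sub_add_eq_add_sub]
    _ = Gamma (a + s) / Gamma a * r ^ (-s) := by
        rw [integral_rpow_mul_exp_neg_mul_Ioi has hr, one_div, inv_rpow hr.le, ← rpow_neg hr.le,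
          neg_add, rpow_add hr, rpow_neg hr.le a]
        field_simp

lemma Iio_subset_integrableExpSet_id_gammaMeasure (ha : 0 < a) (hr : 0 < r) :
    Set.Iio r ⊆ integrableExpSet id (gammaMeasure a r) := fun t ht => by
  have hpos : 0 < 1 - t / r := sub_pos.mpr ((div_lt_one hr).mpr ht)
  -- A non-integrable function has integral `0`, so a nonzero value of the mgf suffices.
  refine not_imp_comm.1 integral_undef (?_ : mgf id (gammaMeasure a r) t ≠ 0)
  rw [mgf_id_gammaMeasure ha hr ht]
  positivity

lemma Ioi_subset_integrableExpSet_log_gammaMeasure (ha : 0 < a) (hr : 0 < r) :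
    Set.Ioi (-a) ⊆ integrableExpSet log (gammaMeasure a r) := fun s hs => by
  have hGamma : 0 < Gamma (a + s) := Gamma_pos_of_pos (by linarith [Set.mem_Ioi.mp hs])
  refine not_imp_comm.1 integral_undef (?_ : mgf log (gammaMeasure a r) s ≠ 0)
  rw [mgf_log_gammaMeasure ha hr hs]
  positivity

lemma zero_mem_interior_integrableExpSet_log_gammaMeasure (ha : 0 < a) (hr : 0 < r) :
    0 ∈ interior (integrableExpSet log (gammaMeasure a r)) :=
  interior_maximal (Ioi_subset_integrableExpSet_log_gammaMeasure ha hr) isOpen_Ioi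
    (neg_lt_zero.mpr ha)

lemma integrable_log_gammaMeasure (ha : 0 < a) (hr : 0 < r) :
    Integrable log (gammaMeasure a r) :=
  integrable_of_mem_interior_integrableExpSet
    (zero_mem_interior_integrableExpSet_log_gammaMeasure ha hr)

lemma integral_log_gammaMeasure (ha : 0 < a) (hr : 0 < r) :
    ∫ x, log x ∂gammaMeasure a r = logDeriv Gamma a - log r := by
  have hmgf : mgf log (gammaMeasure a r) =ᶠ[nhds 0]
      fun s => Gamma (a + s) / Gamma a * r ^ (-s) := by
    filter_upwards [Ioi_mem_nhds (neg_lt_zero.mpr ha)] with s hs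
    exact mgf_log_gammaMeasure ha hr hs
  have hGamma : DifferentiableAt ℝ Gamma (a + 0) :=
    differentiableAt_Gamma fun m => by rw [add_zero]; linarith [m.cast_nonneg (α := ℝ)]
  have hderiv : HasDerivAt (fun s => Gamma (a + s) / Gamma a * r ^ (-s)) _ 0 :=
    ((hGamma.hasDerivAt.comp_const_add a 0).div_const (Gamma a)).mul
      ((hasDerivAt_neg (0 : ℝ)).const_rpow hr)
  rw [← deriv_mgf_zero (zero_mem_interior_integrableExpSet_log_gammaMeasure ha hr),
    hmgf.deriv_eq, hderiv.deriv]
  have := (Gamma_pos_of_pos ha).ne'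
  simp [logDeriv_apply, div_self this]
  ring

lemma complexMGF_id_gammaMeasure (ha : 0 < a) (hr : 0 < r) {z : ℂ} (hz : z.re < r) :
    complexMGF id (gammaMeasure a r) z = (1 - z / r) ^ (-a : ℂ) := by
  let U : Set ℂ := {w | w.re < r}
  have hU : IsOpen U := isOpen_lt Complex.continuous_re continuous_const
  have hmgf : AnalyticOnNhd ℂ (complexMGF id (gammaMeasure a r)) U :=
    analyticOnNhd_complexMGF.mono fun w hw =>
      interior_maximal (Iio_subset_integrableExpSet_id_gammaMeasure ha hr) isOpen_Iio hw
  have hcpow : AnalyticOnNhd ℂ (fun w : ℂ => (1 - w / r) ^ (-a : ℂ)) U := by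
    refine DifferentiableOn.analyticOnNhd (fun w hw => ?_) hU
    have hslit : 1 - w / r ∈ Complex.slitPlane := by
      left
      simpa [Complex.div_ofReal_re] using (div_lt_one hr).mpr hw
    have hbase : DifferentiableAt ℂ (fun w : ℂ => 1 - w / r) w := by fun_prop
    exact (hbase.cpow_const hslit).differentiableWithinAt
  have hreal : ∀ᶠ t : ℝ in nhdsWithin 0 {0}ᶜ,
      complexMGF id (gammaMeasure a r) t = (1 - t / r : ℂ) ^ (-a : ℂ) := by
    filter_upwards [nhdsWithin_le_nhds (Iio_mem_nhds hr)] with t ht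
    have hpos : 0 ≤ 1 - t / r := sub_nonneg.mpr ((div_lt_one hr).mpr ht).le
    rw [complexMGF_ofReal, mgf_id_gammaMeasure ha hr ht, Complex.ofReal_cpow hpos]
    push_cast
    rfl
  have hofReal : Filter.Tendsto ((↑) : ℝ → ℂ) (nhdsWithin 0 {0}ᶜ) (nhdsWithin 0 {0}ᶜ) :=
    tendsto_nhdsWithin_iff.2 ⟨(Complex.continuous_ofReal.tendsto' 0 0 rfl).mono_left
      nhdsWithin_le_nhds, by filter_upwards [self_mem_nhdsWithin] with t ht using by simpa using ht⟩
  exact hmgf.eqOn_of_preconnected_of_frequently_eq hcpow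
    (convex_halfSpace_re_lt r).isPreconnected (z₀ := 0) (by simpa [U] using hr)
    (hofReal.frequently hreal.frequently) hz

lemma charFun_gammaMeasure (ha : 0 < a) (hr : 0 < r) (t : ℝ) :
    charFun (gammaMeasure a r) t = (1 - t / r * Complex.I) ^ (-a : ℂ) := by
  rw [← complexMGF_id_mul_I, complexMGF_id_gammaMeasure ha hr (by simpa using hr),
    mul_div_right_comm]

lemma gammaMeasure_conv_gammaMeasure {b : ℝ} (ha : 0 < a) (hb : 0 < b) (hr : 0 < r) :
    gammaMeasure a r ∗ gammaMeasure b r = gammaMeasure (a + b) r := by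
  have := isProbabilityMeasure_gammaMeasure ha hr
  have := isProbabilityMeasure_gammaMeasure hb hr
  have := isProbabilityMeasure_gammaMeasure (add_pos ha hb) hr
  refine Measure.ext_of_charFun (funext fun t => ?_)
  have hne : 1 - t / r * Complex.I ≠ 0 := fun h => by simpa using congrArg Complex.re h
  rw [charFun_conv, charFun_gammaMeasure ha hr, charFun_gammaMeasure hb hr,
    charFun_gammaMeasure (add_pos ha hb) hr, ← Complex.cpow_add _ _ hne]
  push_cast
  ring_nf

lemma map_sum_pi_gammaMeasure {ι : Type*} [Fintype ι] [Nonempty ι] (ha : 0 < a) (hr : 0 < r) :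
    (Measure.pi fun _ : ι => gammaMeasure a r).map (fun x => ∑ i, x i) =
      gammaMeasure (Fintype.card ι * a) r := by
  have hcard : 0 < Fintype.card ι * a := by positivity
  have := isProbabilityMeasure_gammaMeasure ha hr
  have := isProbabilityMeasure_gammaMeasure hcard hr
  have := Measure.isProbabilityMeasure_map (μ := Measure.pi fun _ : ι => gammaMeasure a r)
    (f := fun x => ∑ i, x i) (by fun_prop)
  refine Measure.ext_of_charFun ?_
  rw [charFun_map_sum_pi_eq_prod]
  ext t
  rw [Finset.prod_apply, Finset.prod_const, card_univ, charFun_gammaMeasure ha hr,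
    charFun_gammaMeasure hcard hr, ← Complex.cpow_nat_mul]
  push_cast
  ring_nf

end Gamma

lemma integral_log_gammaMeasure_add_one_one (k : ℕ) :
    ∫ x, log x ∂gammaMeasure (k + 1) 1 = harmonic k - eulerMascheroniConstant := by
  rw [integral_log_gammaMeasure (by positivity) one_pos, log_one, sub_zero, logDeriv_apply,
    deriv_Gamma_nat, Gamma_nat_eq_factorial, mul_div_cancel_left₀ _ (by positivity), add_comm,
    sub_eq_add_neg]

lemma ofReal_mul_cpow {x : ℝ} (hx : 0 < x) {z : ℂ} (hz : z ≠ 0) (w : ℂ) :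
    (x * z) ^ w = (x : ℂ) ^ w * z ^ w := by
  have hx0 : (x : ℂ) ≠ 0 := Complex.ofReal_ne_zero.2 hx.ne'
  rw [Complex.cpow_def_of_ne_zero (mul_ne_zero hx0 hz), Complex.cpow_def_of_ne_zero hx0,
    Complex.cpow_def_of_ne_zero hz, Complex.log_ofReal_mul hx hz, Complex.ofReal_log hx.le,
    add_mul, Complex.exp_add]

lemma charFun_map_sq_gaussianReal {v : NNReal} (hv : v ≠ 0) (t : ℝ) :
    charFun ((gaussianReal 0 v).map (· ^ 2)) t =
      (1 - (2 * v * t : ℝ) * Complex.I) ^ (-(1 / 2) : ℂ) := by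
  have hv : 0 < (v : ℝ) := NNReal.coe_pos.2 (pos_iff_ne_zero.2 hv)
  set b : ℂ := 1 - (2 * v * t : ℝ) * Complex.I with b_def
  have hb : 0 < b.re := by simp [b]
  have hb0 : b ≠ 0 := fun h => hb.ne' (by rw [h, Complex.zero_re])
  have hbv : 0 < (((2 * v)⁻¹ : ℝ) * b).re := by
    rw [Complex.re_ofReal_mul]
    positivity
  calc charFun ((gaussianReal 0 v).map (· ^ 2)) t
      = ∫ x : ℝ, ((√(2 * π * v))⁻¹ : ℝ) * Complex.exp (-(((2 * v)⁻¹ : ℝ) * b) * (x : ℂ) ^ 2) := by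
        rw [charFun_apply_real, integral_map (by fun_prop) (by fun_prop),
          integral_gaussianReal_eq_integral_smul (by exact_mod_cast hv.ne')]
        congr 1 with x
        rw [gaussianPDFReal, Complex.real_smul, Complex.ofReal_mul, mul_assoc,
          Complex.ofReal_exp, ← Complex.exp_add]
        congr 2
        rw [b_def]
        push_cast
        field_simp
        ring
    _ = ((√(2 * π * v))⁻¹ : ℝ) * (((2 * π * v : ℝ) : ℂ) * b⁻¹) ^ (1 / 2 : ℂ) := by
        rw [integral_const_mul, integral_gaussian_complex hbv]
        congr 2
        push_cast
        field_simp
    _ = b ^ (-(1 / 2) : ℂ) := by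
        have hpos : 0 < 2 * π * v := by positivity
        rw [ofReal_mul_cpow hpos (inv_ne_zero hb0),
          Complex.inv_cpow _ _ fun h => hb.not_gt (Complex.arg_eq_pi_iff.1 h).1, Complex.cpow_neg,
          show (1 / 2 : ℂ) = ((1 / 2 : ℝ) : ℂ) by norm_num, ← Complex.ofReal_cpow hpos.le,
          ← sqrt_eq_rpow, ← mul_assoc, ← Complex.ofReal_mul, inv_mul_cancel₀ (by positivity),
          Complex.ofReal_one, one_mul]

lemma map_sq_gaussianReal {v : NNReal} (hv : v ≠ 0) :
    (gaussianReal 0 v).map (· ^ 2) = gammaMeasure (1 / 2) (2 * v)⁻¹ := by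
  have hr : 0 < (2 * v : ℝ)⁻¹ := by
    have : 0 < (v : ℝ) := NNReal.coe_pos.2 (pos_iff_ne_zero.2 hv)
    positivity
  have := isProbabilityMeasure_gammaMeasure (a := 1 / 2) (by norm_num) hr
  have := Measure.isProbabilityMeasure_map (μ := gaussianReal 0 v) (f := (· ^ 2)) (by fun_prop)
  refine Measure.ext_of_charFun (funext fun t => ?_)
  rw [charFun_map_sq_gaussianReal hv, charFun_gammaMeasure (by norm_num) hr, mul_comm _ t,
    ← div_inv_eq_mul t]
  push_cast
  rfl

instance : IsProbabilityMeasure stdCGaussian := by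
  unfold stdCGaussian
  exact Measure.isProbabilityMeasure_map (by fun_prop)

lemma map_norm_sq_stdCGaussian : stdCGaussian.map (‖·‖ ^ 2) = gammaMeasure 1 1 := by
  have hsq : (gaussianReal 0 (1 / 2)).map (· ^ 2) = gammaMeasure (1 / 2) 1 := by
    rw [map_sq_gaussianReal (by norm_num)]
    norm_num
  have hnorm : (fun z : ℂ => ‖z‖ ^ 2) ∘ (fun p : ℝ × ℝ => (p.1 + p.2 * Complex.I : ℂ)) =
      (fun p => p.1 + p.2) ∘ Prod.map (· ^ 2) (· ^ 2) := by
    ext p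
    simp [Complex.sq_norm, Complex.normSq_add_mul_I]
  rw [stdCGaussian, Measure.map_map (by fun_prop) (by fun_prop), hnorm,
    ← Measure.map_map (by fun_prop) (by fun_prop), ← Measure.map_prod_map _ _ (by fun_prop)
    (by fun_prop), hsq]
  change gammaMeasure (1 / 2) 1 ∗ gammaMeasure (1 / 2) 1 = _
  rw [gammaMeasure_conv_gammaMeasure (by norm_num) (by norm_num) one_pos, add_halves]

lemma map_sum_norm_sq_pi_stdCGaussian (ι : Type*) [Fintype ι] [Nonempty ι] :
    (Measure.pi fun _ : ι => stdCGaussian).map (fun z => ∑ i, ‖z i‖ ^ 2) =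
      gammaMeasure (Fintype.card ι) 1 := by
  have := isProbabilityMeasure_gammaMeasure one_pos one_pos
  have hmap : (Measure.pi fun _ : ι => stdCGaussian).map (fun z i => ‖z i‖ ^ 2) =
      Measure.pi fun _ : ι => gammaMeasure 1 1 := by
    rw [Measure.pi_map_pi (f := fun _ z => ‖z‖ ^ 2) fun _ => by fun_prop]
    simp_rw [map_norm_sq_stdCGaussian]
  rw [← mul_one (Fintype.card ι : ℝ), ← map_sum_pi_gammaMeasure one_pos one_pos, ← hmap,
    Measure.map_map (by fun_prop) (by fun_prop)]
  rfl

lemma ae_ne_zero_stdCGaussian : ∀ᵐ z ∂stdCGaussian, z ≠ 0 := by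
  have hgamma : ∀ᵐ x ∂gammaMeasure 1 1, x ≠ 0 :=
    (withDensity_absolutelyContinuous _ _).ae_le (Measure.ae_ne volume 0)
  rw [← map_norm_sq_stdCGaussian] at hgamma
  filter_upwards [ae_of_ae_map (by fun_prop) hgamma] with z hz
  simpa using hz

lemma charFun_stdCGaussian (t : ℂ) : charFun stdCGaussian t = Complex.exp (-(‖t‖ ^ 2 / 4)) := by
  have hmul : ∀ p : ℝ × ℝ,
      Complex.exp (inner ℝ (p.1 + p.2 * Complex.I : ℂ) t * Complex.I) =
        Complex.exp (t.re * p.1 * Complex.I) * Complex.exp (t.im * p.2 * Complex.I) := fun p => by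
    rw [← Complex.exp_add]
    simp [Complex.inner]
    ring_nf
  rw [charFun_apply, stdCGaussian, integral_map (by fun_prop) (by fun_prop)]
  simp_rw [hmul]
  rw [integral_prod_mul (fun x : ℝ => Complex.exp (t.re * x * Complex.I))
      (fun x : ℝ => Complex.exp (t.im * x * Complex.I)), ← charFun_apply_real,
    ← charFun_apply_real, charFun_gaussianReal, charFun_gaussianReal, ← Complex.exp_add,
    ← Complex.ofReal_pow ‖t‖, Complex.sq_norm, Complex.normSq_apply]
  push_cast
  ring_nf

lemma charFun_map_const_mul_stdCGaussian (w t : ℂ) :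
    charFun (stdCGaussian.map (w * ·)) t = Complex.exp (-(‖w‖ ^ 2 * ‖t‖ ^ 2 / 4)) := by
  have hinner : ∀ z : ℂ, inner ℝ (w * z) t = inner ℝ z (star w * t) := fun z => by
    simp [Complex.inner]
    ring
  rw [charFun_apply, integral_map (by fun_prop) (by fun_prop)]
  simp_rw [hinner]
  rw [← charFun_apply, charFun_stdCGaussian, norm_mul, norm_star]
  push_cast
  rw [mul_pow]

instance : stdCGaussian.IsNegInvariant where
  neg_eq_self := by
    have hneg : stdCGaussian.neg = stdCGaussian.map (-1 * ·) := by simp [Measure.neg]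
    rw [hneg]
    have := Measure.isProbabilityMeasure_map (μ := stdCGaussian) (f := (-1 * ·)) (by fun_prop)
    refine Measure.ext_of_charFun (funext fun t => ?_)
    rw [charFun_map_const_mul_stdCGaussian, charFun_stdCGaussian, norm_neg, norm_one,
      Complex.ofReal_one, one_pow, one_mul]

lemma map_dotProduct_pi_stdCGaussian {ι : Type*} [Fintype ι] (c : ι → ℂ) :
    (Measure.pi fun _ => stdCGaussian).map (c ⬝ᵥ ·) =
      stdCGaussian.map (((√(∑ i, ‖c i‖ ^ 2) : ℝ) : ℂ) * ·) := by
  have hprob (w : ℂ) : IsProbabilityMeasure (stdCGaussian.map (w * ·)) :=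
    Measure.isProbabilityMeasure_map (by fun_prop)
  have hsum : (Measure.pi fun _ => stdCGaussian).map (c ⬝ᵥ ·) =
      (Measure.pi fun i => stdCGaussian.map (c i * ·)).map fun z => ∑ i, z i := by
    rw [← Measure.pi_map_pi (f := fun i z => c i * z) fun i => by fun_prop,
      Measure.map_map (by fun_prop) (by fun_prop)]
    rfl
  have := Measure.isProbabilityMeasure_map
    (μ := Measure.pi fun i => stdCGaussian.map (c i * ·)) (f := fun z => ∑ i, z i) (by fun_prop)
  rw [hsum]
  refine Measure.ext_of_charFun (funext fun t => ?_)
  rw [charFun_map_sum_pi_eq_prod, Finset.prod_apply, charFun_map_const_mul_stdCGaussian]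
  simp_rw [charFun_map_const_mul_stdCGaussian]
  rw [← Complex.exp_sum, Complex.norm_real, norm_of_nonneg (sqrt_nonneg _),
    ← Complex.ofReal_pow √_, sq_sqrt (by positivity), sum_neg_distrib, ← Finset.sum_div,
    ← Finset.sum_mul]
  push_cast
  rfl

section LogMoments

variable {ι : Type*} [Fintype ι]

lemma integrable_log_sum_norm_sq_pi_stdCGaussian [Nonempty ι] :
    Integrable (fun z => log (∑ i, ‖z i‖ ^ 2)) (Measure.pi fun _ : ι => stdCGaussian) := by
  have hlog := integrable_log_gammaMeasure (Nat.cast_pos.2 (Fintype.card_pos (α := ι))) one_pos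
  rw [← map_sum_norm_sq_pi_stdCGaussian] at hlog
  exact hlog.comp_measurable (by fun_prop)

lemma integral_log_sum_norm_sq_pi_stdCGaussian [Nonempty ι] :
    ∫ z, log (∑ i, ‖z i‖ ^ 2) ∂(Measure.pi fun _ : ι => stdCGaussian) =
      harmonic (Fintype.card ι - 1) - eulerMascheroniConstant := by
  obtain ⟨k, hk⟩ := Nat.exists_eq_succ_of_ne_zero (Fintype.card_ne_zero (α := ι))
  have hmeas : Measurable fun z : ι → ℂ => ∑ i, ‖z i‖ ^ 2 := by fun_prop
  rw [← integral_map (f := log) hmeas.aemeasurable measurable_log.aestronglyMeasurable,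
    map_sum_norm_sq_pi_stdCGaussian, hk, Nat.cast_succ, integral_log_gammaMeasure_add_one_one,
    Nat.succ_sub_one]

lemma integrable_log_norm_sq_stdCGaussian :
    Integrable (fun z => log (‖z‖ ^ 2)) stdCGaussian := by
  have hlog := integrable_log_gammaMeasure one_pos one_pos
  rw [← map_norm_sq_stdCGaussian] at hlog
  exact hlog.comp_measurable (by fun_prop)

lemma integral_log_norm_sq_stdCGaussian :
    ∫ z, log (‖z‖ ^ 2) ∂stdCGaussian = -eulerMascheroniConstant := by
  have hgamma := integral_log_gammaMeasure_add_one_one 0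
  have hmeas : Measurable fun z : ℂ => ‖z‖ ^ 2 := by fun_prop
  rw [← integral_map (f := log) hmeas.aemeasurable measurable_log.aestronglyMeasurable,
    map_norm_sq_stdCGaussian]
  simpa using hgamma

variable {c : ι → ℂ}

lemma ae_dotProduct_ne_zero_pi_stdCGaussian (hc : c ≠ 0) :
    ∀ᵐ z ∂(Measure.pi fun _ => stdCGaussian), c ⬝ᵥ z ≠ 0 := by
  have hc : √(∑ i, ‖c i‖ ^ 2) ≠ 0 := (sqrt_pos.2 (sum_norm_sq_pos_iff.2 hc)).ne'
  refine ae_of_ae_map (p := (· ≠ 0)) (by fun_prop) ?_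
  rw [map_dotProduct_pi_stdCGaussian, ae_map_iff (by fun_prop) (by measurability)]
  filter_upwards [ae_ne_zero_stdCGaussian] with z hz
  exact mul_ne_zero (Complex.ofReal_ne_zero.2 hc) hz

lemma log_norm_sq_sqrt_mul_ae_eq {q : ℝ} (hq : 0 < q) :
    (fun z : ℂ => log (‖(√q : ℂ) * z‖ ^ 2)) =ᵐ[stdCGaussian] fun z => log q + log (‖z‖ ^ 2) := by
  filter_upwards [ae_ne_zero_stdCGaussian] with z hz
  rw [norm_mul, mul_pow, Complex.norm_real, norm_of_nonneg (sqrt_nonneg q), sq_sqrt hq.le,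
    log_mul hq.ne' (by positivity)]

lemma integrable_log_norm_sq_dotProduct_pi_stdCGaussian (hc : c ≠ 0) :
    Integrable (fun z => log (‖c ⬝ᵥ z‖ ^ 2)) (Measure.pi fun _ => stdCGaussian) := by
  have hlog : Integrable (fun w : ℂ => log (‖w‖ ^ 2))
      ((Measure.pi fun _ => stdCGaussian).map (c ⬝ᵥ ·)) := by
    have hmeas : Measurable fun w : ℂ => log (‖w‖ ^ 2) := by fun_prop
    rw [map_dotProduct_pi_stdCGaussian,
      integrable_map_measure hmeas.aestronglyMeasurable (by fun_prop)]
    exact ((integrable_const _).add integrable_log_norm_sq_stdCGaussian).congr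
      (log_norm_sq_sqrt_mul_ae_eq (sum_norm_sq_pos_iff.2 hc)).symm
  exact hlog.comp_measurable (by fun_prop)

lemma integral_log_norm_sq_dotProduct_pi_stdCGaussian (hc : c ≠ 0) :
    ∫ z, log (‖c ⬝ᵥ z‖ ^ 2) ∂(Measure.pi fun _ => stdCGaussian) =
      log (∑ i, ‖c i‖ ^ 2) - eulerMascheroniConstant := by
  have hmeas : Measurable (c ⬝ᵥ ·) := by fun_prop
  have hlog : Measurable fun w : ℂ => log (‖w‖ ^ 2) := by fun_prop
  rw [← integral_map (f := fun w : ℂ => log (‖w‖ ^ 2)) hmeas.aemeasurable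
      hlog.aestronglyMeasurable, map_dotProduct_pi_stdCGaussian,
    integral_map (by fun_prop) hlog.aestronglyMeasurable,
    integral_congr_ae (log_norm_sq_sqrt_mul_ae_eq (sum_norm_sq_pos_iff.2 hc)),
    integral_add (integrable_const _) integrable_log_norm_sq_stdCGaussian,
    integral_log_norm_sq_stdCGaussian, integral_const, probReal_univ, one_smul, sub_eq_add_neg]

end LogMoments

section Direction

variable {𝕜 ι : Type*} [RCLike 𝕜] [Fintype ι]

/-- The orthogonal projection of `𝕜^ι` onto the line spanned by `z`, as a matrix; it encodes the
direction of `z` without its phase. At `z = 0` it is the zero matrix. -/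
noncomputable def lineProj (z : ι → 𝕜) : Matrix ι ι 𝕜 :=
  (∑ i, ‖z i‖ ^ 2)⁻¹ • vecMulVec z (star z)

lemma lineProj_apply (z : ι → 𝕜) (i j : ι) :
    lineProj z i j = (∑ k, ‖z k‖ ^ 2)⁻¹ • (z i * star (z j)) := rfl

lemma norm_lineProj_apply_le_one (z : ι → 𝕜) (i j : ι) : ‖lineProj z i j‖ ≤ 1 := by
  have hle (k : ι) : ‖z k‖ ^ 2 ≤ ∑ l, ‖z l‖ ^ 2 :=
    single_le_sum (f := fun l => ‖z l‖ ^ 2) (fun l _ => sq_nonneg _) (mem_univ k)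
  rw [lineProj_apply, norm_smul, norm_mul, norm_star, norm_inv,
    norm_of_nonneg (by positivity : (0 : ℝ) ≤ ∑ l, ‖z l‖ ^ 2), inv_mul_eq_div]
  refine div_le_one_of_le₀ ?_ (by positivity)
  linarith [hle i, hle j, two_mul_le_add_sq ‖z i‖ ‖z j‖]

lemma trace_lineProj {z : ι → 𝕜} (hz : z ≠ 0) : (lineProj z).trace = 1 := by
  have hN : ((∑ i, ‖z i‖ ^ 2 : ℝ) : 𝕜) ≠ 0 := by
    exact_mod_cast (sum_norm_sq_pos_iff.2 hz).ne'
  simp only [Matrix.trace, diag_apply, lineProj_apply, RCLike.star_def, RCLike.mul_conj]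
  rw [← smul_sum, RCLike.real_smul_eq_coe_mul, RCLike.ofReal_inv]
  push_cast at hN ⊢
  exact inv_mul_cancel₀ hN

lemma trace_mul_lineProj (A : Matrix ι ι 𝕜) (z : ι → 𝕜) :
    (A * lineProj z).trace = (star z ⬝ᵥ A *ᵥ z) / ((∑ i, ‖z i‖ ^ 2 : ℝ) : 𝕜) := by
  rw [lineProj, mul_smul_comm, trace_smul, mul_vecMulVec, trace_vecMulVec, dotProduct_comm,
    RCLike.real_smul_eq_coe_mul, RCLike.ofReal_inv, inv_mul_eq_div]

@[fun_prop]
lemma measurable_lineProj_apply (i j : ι) : Measurable fun z : ι → 𝕜 => lineProj z i j := by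
  have hstar : Measurable fun z : ι → 𝕜 => star (z j) :=
    continuous_star.measurable.comp (measurable_pi_apply j)
  simp only [lineProj_apply]
  fun_prop

variable (μ : Measure 𝕜) [IsProbabilityMeasure μ]

lemma integrable_lineProj_apply (i j : ι) :
    Integrable (fun z : ι → 𝕜 => lineProj z i j) (Measure.pi fun _ => μ) :=
  .of_bound (by fun_prop) 1 (ae_of_all _ fun z => norm_lineProj_apply_le_one z i j)

lemma integral_lineProj_apply_of_ne [μ.IsNegInvariant] {i j : ι} (hij : i ≠ j) :
    ∫ z : ι → 𝕜, lineProj z i j ∂(Measure.pi fun _ => μ) = 0 := by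
  classical
  let flip (k : ι) : 𝕜 → 𝕜 := if k = i then Neg.neg else id
  have hflip : MeasurePreserving (fun (z : ι → 𝕜) k => flip k (z k)) (Measure.pi fun _ => μ)
      (Measure.pi fun _ => μ) := by
    refine measurePreserving_pi (fun _ => μ) (fun _ => μ) fun k => ?_
    by_cases hk : k = i
    · simpa only [flip, if_pos hk] using Measure.measurePreserving_neg μ
    · simpa only [flip, if_neg hk] using MeasurePreserving.id μ
  have hnorm (k : ι) (w : 𝕜) : ‖flip k w‖ = ‖w‖ := by
    by_cases hk : k = i <;> simp [flip, hk]
  have hneg (z : ι → 𝕜) : lineProj (fun k => flip k (z k)) i j = -lineProj z i j := by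
    simp only [lineProj_apply, hnorm]
    simp [flip, hij.symm]
  refine self_eq_neg.1 ?_
  rw [← integral_neg]
  simp_rw [← hneg]
  rw [← integral_map (f := fun z => lineProj z i j) hflip.aemeasurable (by fun_prop),
    hflip.map_eq]

lemma integral_lineProj_apply_self_eq (i j : ι) :
    ∫ z : ι → 𝕜, lineProj z i i ∂(Measure.pi fun _ => μ) =
      ∫ z : ι → 𝕜, lineProj z j j ∂(Measure.pi fun _ => μ) := by
  classical
  have hswap := measurePreserving_piCongrLeft (fun _ : ι => μ) (Equiv.swap i j)
  have hentry (z : ι → 𝕜) (k : ι) :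
      MeasurableEquiv.piCongrLeft (fun _ : ι => 𝕜) (Equiv.swap i j) z k =
        z (Equiv.swap i j k) := by
    conv_lhs => rw [← Equiv.swap_apply_self i j k]
    rw [MeasurableEquiv.coe_piCongrLeft]
    exact Equiv.piCongrLeft_apply_apply _ _ _ _
  rw [← hswap.integral_comp']
  congr 1 with z
  simp only [lineProj_apply, hentry, Equiv.swap_apply_left]
  rw [Equiv.sum_comp (Equiv.swap i j) fun k => ‖z k‖ ^ 2]

variable {μ}

lemma integral_lineProj_apply_self (hμ : ∀ᵐ w ∂μ, w ≠ 0) (i : ι) :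
    ∫ z : ι → 𝕜, lineProj z i i ∂(Measure.pi fun _ => μ) = (Fintype.card ι : 𝕜)⁻¹ := by
  have hne : ∀ᵐ z : ι → 𝕜 ∂(Measure.pi fun _ => μ), z ≠ 0 := by
    filter_upwards [(measurePreserving_eval (fun _ : ι => μ) i).quasiMeasurePreserving.ae hμ]
      with z hz h
    exact hz (congrFun h i)
  have htrace : ∑ j, ∫ z : ι → 𝕜, lineProj z j j ∂(Measure.pi fun _ => μ) = 1 := by
    rw [← integral_finsetSum _ fun j _ => integrable_lineProj_apply μ j j,
      integral_congr_ae (g := fun _ => 1)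
        (by filter_upwards [hne] with z hz using trace_lineProj hz)]
    simp
  simp_rw [fun j => integral_lineProj_apply_self_eq μ j i] at htrace
  rw [sum_const, card_univ, nsmul_eq_mul] at htrace
  exact eq_inv_of_mul_eq_one_right htrace

lemma integrable_trace_mul_lineProj (A : Matrix ι ι 𝕜) :
    Integrable (fun z => (A * lineProj z).trace) (Measure.pi fun _ => μ) :=
  integrable_finsetSum _ fun i _ => integrable_finsetSum _ fun j _ =>
    (integrable_lineProj_apply μ j i).const_mul _

lemma integral_trace_mul_lineProj [μ.IsNegInvariant] (hμ : ∀ᵐ w ∂μ, w ≠ 0)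
    (A : Matrix ι ι 𝕜) :
    ∫ z, (A * lineProj z).trace ∂(Measure.pi fun _ => μ) = A.trace / Fintype.card ι := by
  classical
  have hentry (i j : ι) : ∫ z : ι → 𝕜, lineProj z i j ∂(Measure.pi fun _ => μ) =
      ((Fintype.card ι : 𝕜)⁻¹ • (1 : Matrix ι ι 𝕜)) i j := by
    by_cases hij : i = j
    · rw [hij, integral_lineProj_apply_self hμ]
      simp
    · rw [integral_lineProj_apply_of_ne μ hij]
      simp [hij]
  calc ∫ z, (A * lineProj z).trace ∂(Measure.pi fun _ => μ)
      = ∑ i, ∑ j, A i j * ∫ z : ι → 𝕜, lineProj z j i ∂(Measure.pi fun _ => μ) := by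
        simp only [Matrix.trace, diag_apply, Matrix.mul_apply]
        have hint (i j : ι) : Integrable (fun z => A i j * lineProj z j i)
            (Measure.pi fun _ => μ) := (integrable_lineProj_apply μ j i).const_mul _
        rw [integral_finsetSum _ fun i _ => integrable_finsetSum _ fun j _ => hint i j]
        simp_rw [integral_finsetSum _ fun j _ => hint _ j, integral_const_mul]
    _ = (A * ((Fintype.card ι : 𝕜)⁻¹ • (1 : Matrix ι ι 𝕜))).trace := by
        simp only [hentry, Matrix.trace, diag_apply, Matrix.mul_apply]
    _ = A.trace / Fintype.card ι := by
        rw [mul_smul_comm, mul_one, trace_smul, smul_eq_mul, inv_mul_eq_div]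

variable {κ : Type*} [Fintype κ]

lemma sum_norm_sq_mulVec_div_eq_re_trace (U : Matrix κ ι 𝕜) (z : ι → 𝕜) :
    (∑ j, ‖(U *ᵥ z) j‖ ^ 2) / ∑ i, ‖z i‖ ^ 2 = RCLike.re (Uᴴ * U * lineProj z).trace := by
  rw [trace_mul_lineProj, ← mulVec_mulVec, dotProduct_mulVec, ← star_mulVec,
    star_dotProduct_self_eq_sum_norm_sq, ← RCLike.ofReal_div, RCLike.ofReal_re]

lemma integrable_sum_norm_sq_mulVec_div (U : Matrix κ ι 𝕜) :
    Integrable (fun z => (∑ j, ‖(U *ᵥ z) j‖ ^ 2) / ∑ i, ‖z i‖ ^ 2) (Measure.pi fun _ => μ) := by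
  simp_rw [sum_norm_sq_mulVec_div_eq_re_trace]
  exact (integrable_trace_mul_lineProj _).re

lemma integral_sum_norm_sq_mulVec_div [μ.IsNegInvariant] (hμ : ∀ᵐ w ∂μ, w ≠ 0) {U : Matrix κ ι 𝕜}
    {t : ℝ} (ht : (U * Uᴴ).trace = t) :
    ∫ z, (∑ j, ‖(U *ᵥ z) j‖ ^ 2) / ∑ i, ‖z i‖ ^ 2 ∂(Measure.pi fun _ => μ) =
      t / Fintype.card ι := by
  simp_rw [sum_norm_sq_mulVec_div_eq_re_trace]
  rw [integral_re (integrable_trace_mul_lineProj _), integral_trace_mul_lineProj hμ,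
    trace_mul_comm, ht]
  norm_cast

end Direction

section LinearImage

variable {κ ρ : Type*} [Fintype ρ] {U : Matrix κ ρ ℂ}

lemma ae_mulVec_ne_zero_pi_stdCGaussian (hU : U ≠ 0) :
    ∀ᵐ z ∂(Measure.pi fun _ => stdCGaussian), U *ᵥ z ≠ 0 := by
  obtain ⟨j, hj⟩ := Function.ne_iff.1 hU
  filter_upwards [ae_dotProduct_ne_zero_pi_stdCGaussian hj] with z hz h
  exact hz (congrFun h j)

variable [Fintype κ]

lemma log_sum_norm_sq_mulVec_div_ae_eq (hU : U ≠ 0) :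
    (fun z => log ((∑ j, ‖(U *ᵥ z) j‖ ^ 2) / ∑ k, ‖z k‖ ^ 2))
      =ᵐ[Measure.pi fun _ => stdCGaussian]
        fun z => log (∑ j, ‖(U *ᵥ z) j‖ ^ 2) - log (∑ k, ‖z k‖ ^ 2) := by
  filter_upwards [ae_mulVec_ne_zero_pi_stdCGaussian hU] with z hUz
  have hz : z ≠ 0 := fun h => hUz (by rw [h, mulVec_zero])
  exact log_div (sum_norm_sq_pos_iff.2 hUz).ne' (sum_norm_sq_pos_iff.2 hz).ne'

lemma integrable_log_sum_norm_sq_mulVec_pi_stdCGaussian (hU : U ≠ 0) :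
    Integrable (fun z => log (∑ j, ‖(U *ᵥ z) j‖ ^ 2)) (Measure.pi fun _ => stdCGaussian) := by
  obtain ⟨j, hj⟩ := Function.ne_iff.1 hU
  obtain ⟨k, -⟩ := Function.ne_iff.1 hj
  have : Nonempty ρ := ⟨k⟩
  have hmeas : Measurable fun z => log (∑ j, ‖(U *ᵥ z) j‖ ^ 2) := by
    simp only [mulVec]
    fun_prop
  refine integrable_of_le_of_le hmeas.aestronglyMeasurable ?_ ?_
    (integrable_log_norm_sq_dotProduct_pi_stdCGaussian hj)
    (integrable_log_sum_norm_sq_pi_stdCGaussian.add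
      (integrable_sum_norm_sq_mulVec_div (μ := stdCGaussian) U))
  · filter_upwards [ae_dotProduct_ne_zero_pi_stdCGaussian hj] with z hz
    exact log_le_log (by positivity) (single_le_sum (f := fun j => ‖(U *ᵥ z) j‖ ^ 2)
      (fun _ _ => sq_nonneg _) (mem_univ j))
  · filter_upwards [log_sum_norm_sq_mulVec_div_ae_eq hU] with z hz
    have hle := log_le_self
      (by positivity : 0 ≤ (∑ j, ‖(U *ᵥ z) j‖ ^ 2) / ∑ k, ‖z k‖ ^ 2)
    rw [hz] at hle
    simpa only [Pi.add_apply] using sub_le_iff_le_add'.1 hle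

lemma integral_log_sum_norm_sq_mulVec_pi_stdCGaussian_le {t : ℝ} (ht : 0 < t)
    (htr : (U * Uᴴ).trace = t) :
    ∫ z, log (∑ j, ‖(U *ᵥ z) j‖ ^ 2) ∂(Measure.pi fun _ => stdCGaussian) ≤
      harmonic (Fintype.card ρ - 1) - eulerMascheroniConstant + log (t / Fintype.card ρ) := by
  have hU : U ≠ 0 := by
    rintro rfl
    rw [Matrix.zero_mul, trace_zero] at htr
    exact ht.ne (mod_cast htr)
  obtain ⟨j, hj⟩ := Function.ne_iff.1 hU
  obtain ⟨k, -⟩ := Function.ne_iff.1 hj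
  have : Nonempty ρ := ⟨k⟩
  have hlogU := integrable_log_sum_norm_sq_mulVec_pi_stdCGaussian hU
  have hlog := integrable_log_sum_norm_sq_pi_stdCGaussian (ι := ρ)
  have hpos : ∀ᵐ z ∂(Measure.pi fun _ => stdCGaussian),
      0 < (∑ j, ‖(U *ᵥ z) j‖ ^ 2) / ∑ k, ‖z k‖ ^ 2 := by
    filter_upwards [ae_mulVec_ne_zero_pi_stdCGaussian hU] with z hUz
    have hz : z ≠ 0 := fun h => hUz (by rw [h, mulVec_zero])
    exact div_pos (sum_norm_sq_pos_iff.2 hUz) (sum_norm_sq_pos_iff.2 hz)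
  have hjensen := exp_integral_log_le_integral (integrable_sum_norm_sq_mulVec_div U)
    ((hlogU.sub hlog).congr (log_sum_norm_sq_mulVec_div_ae_eq hU).symm) hpos
  rw [integral_sum_norm_sq_mulVec_div ae_ne_zero_stdCGaussian htr,
    integral_congr_ae (log_sum_norm_sq_mulVec_div_ae_eq hU), integral_sub hlogU hlog,
    integral_log_sum_norm_sq_pi_stdCGaussian, ← le_log_iff_exp_le (by positivity)] at hjensen
  exact sub_le_iff_le_add'.1 hjensen

variable {v : κ → ℂ} {t : ℝ}

lemma ae_norm_sq_star_dotProduct_rescale_pos (ht : 0 < t) (hv : star v ᵥ* U ≠ 0) :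
    ∀ᵐ z ∂(Measure.pi fun _ => stdCGaussian), 0 < ‖star v ⬝ᵥ rescale t (U *ᵥ z)‖ ^ 2 := by
  filter_upwards [ae_dotProduct_ne_zero_pi_stdCGaussian hv] with z hz
  rw [← dotProduct_mulVec] at hz
  have hUz : U *ᵥ z ≠ 0 := fun h => hz (by rw [h, dotProduct_zero])
  have := sum_norm_sq_pos_iff.2 hUz
  rw [norm_sq_dotProduct_rescale ht.le]
  positivity

lemma log_norm_sq_star_dotProduct_rescale_ae_eq (ht : 0 < t) (hv : star v ᵥ* U ≠ 0) :
    (fun z => log (‖star v ⬝ᵥ rescale t (U *ᵥ z)‖ ^ 2)) =ᵐ[Measure.pi fun _ => stdCGaussian]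
      fun z => log t - log (∑ j, ‖(U *ᵥ z) j‖ ^ 2) + log (‖(star v ᵥ* U) ⬝ᵥ z‖ ^ 2) := by
  filter_upwards [ae_dotProduct_ne_zero_pi_stdCGaussian hv] with z hz
  rw [← dotProduct_mulVec] at hz ⊢
  have hUz : U *ᵥ z ≠ 0 := fun h => hz (by rw [h, dotProduct_zero])
  have := sum_norm_sq_pos_iff.2 hUz
  rw [norm_sq_dotProduct_rescale ht.le, log_mul (by positivity) (by positivity),
    log_div ht.ne' this.ne']

lemma integrable_log_norm_sq_star_dotProduct_rescale (ht : 0 < t) (hv : star v ᵥ* U ≠ 0) :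
    Integrable (fun z => log (‖star v ⬝ᵥ rescale t (U *ᵥ z)‖ ^ 2))
      (Measure.pi fun _ => stdCGaussian) := by
  have hU : U ≠ 0 := fun h => hv (by rw [h, vecMul_zero])
  exact (((integrable_const _).sub (integrable_log_sum_norm_sq_mulVec_pi_stdCGaussian hU)).add
    (integrable_log_norm_sq_dotProduct_pi_stdCGaussian hv)).congr
      (log_norm_sq_star_dotProduct_rescale_ae_eq ht hv).symm

lemma le_integral_log_norm_sq_star_dotProduct_rescale (ht : 0 < t) (htr : (U * Uᴴ).trace = t)
    (hv : star v ᵥ* U ≠ 0) :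
    log (∑ k, ‖(star v ᵥ* U) k‖ ^ 2) -
        (harmonic (Fintype.card ρ - 1) - log (Fintype.card ρ)) ≤
      ∫ z, log (‖star v ⬝ᵥ rescale t (U *ᵥ z)‖ ^ 2) ∂(Measure.pi fun _ => stdCGaussian) := by
  have hU : U ≠ 0 := fun h => hv (by rw [h, vecMul_zero])
  obtain ⟨k, -⟩ := Function.ne_iff.1 hv
  have : Nonempty ρ := ⟨k⟩
  have hlogU := integrable_log_sum_norm_sq_mulVec_pi_stdCGaussian hU
  have hsub : Integrable (fun z => log t - log (∑ j, ‖(U *ᵥ z) j‖ ^ 2))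
      (Measure.pi fun _ => stdCGaussian) := (integrable_const _).sub hlogU
  have hupper := integral_log_sum_norm_sq_mulVec_pi_stdCGaussian_le ht htr
  rw [log_div ht.ne' (by positivity)] at hupper
  rw [integral_congr_ae (log_norm_sq_star_dotProduct_rescale_ae_eq ht hv),
    integral_add hsub (integrable_log_norm_sq_dotProduct_pi_stdCGaussian hv),
    integral_sub (integrable_const _) hlogU, integral_log_norm_sq_dotProduct_pi_stdCGaussian hv,
    integral_const, probReal_univ, one_smul]
  linarith

end LinearImage

theorem stmt13_general {ι κ ρ : Type*} [Fintype ι] [Fintype κ] [Fintype ρ]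
    (v : ι → κ → ℂ) (U : Matrix κ ρ ℂ) {t : ℝ} (ht : 0 < t) (htr : (U * Uᴴ).trace = t) :
    exp (-(Fintype.card ι : ℝ) * (harmonic (Fintype.card ρ - 1) - log (Fintype.card ρ))) *
        ∏ i, (star (v i) ⬝ᵥ (U * Uᴴ) *ᵥ v i).re ≤
      ∫ z, ∏ i, ‖star (v i) ⬝ᵥ rescale t (U *ᵥ z)‖ ^ 2 ∂(Measure.pi fun _ => stdCGaussian) := by
  set L : ℝ := harmonic (Fintype.card ρ - 1) - log (Fintype.card ρ)
  simp only [star_dotProduct_mul_conjTranspose_mulVec, Complex.coe_algebraMap, Complex.ofReal_re]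
  by_cases hv : ∃ i, star (v i) ᵥ* U = 0
  · obtain ⟨i, hi⟩ := hv
    rw [prod_eq_zero (mem_univ i) (by simp [hi]), mul_zero]
    exact integral_nonneg fun z => by positivity
  push Not at hv
  calc exp (-Fintype.card ι * L) * ∏ i, ∑ k, ‖(star (v i) ᵥ* U) k‖ ^ 2
      = exp (∑ i, (log (∑ k, ‖(star (v i) ᵥ* U) k‖ ^ 2) - L)) := by
        simp_rw [exp_sum, exp_sub, exp_log (sum_norm_sq_pos_iff.2 (hv _)), div_eq_inv_mul,
          prod_mul_distrib, prod_const, card_univ, ← exp_neg, ← exp_nat_mul, neg_mul, mul_neg]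
    _ ≤ exp (∑ i, ∫ z, log (‖star (v i) ⬝ᵥ rescale t (U *ᵥ z)‖ ^ 2)
          ∂(Measure.pi fun _ => stdCGaussian)) := exp_le_exp.2 <| sum_le_sum fun i _ =>
        le_integral_log_norm_sq_star_dotProduct_rescale ht htr (hv i)
    _ ≤ ∫ z, ∏ i, ‖star (v i) ⬝ᵥ rescale t (U *ᵥ z)‖ ^ 2 ∂(Measure.pi fun _ => stdCGaussian) :=
        exp_sum_integral_log_le_integral_prod
          (integrable_prod_norm_sq_star_dotProduct_rescale _ ht.le v U)
          (fun i => integrable_log_norm_sq_star_dotProduct_rescale ht (hv i))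
          (fun i => ae_norm_sq_star_dotProduct_rescale_pos ht (hv i))

/-- Rounding guarantee: with `P = U Uᴴ` HPSD, `Tr P = n`, `rank P = r`, `z ~ 𝒞𝒩(0, I_r)` and
`y = √n · Uz/‖Uz‖`, we have `E[∏ᵢ |⟨vᵢ, y⟩|²] ≥ e^{−n L_r} ∏ᵢ vᵢᴴ P vᵢ`
where `L_r = H_{r−1} − log r` and `vᵢ` are the columns of `V`. -/
theorem stmt13 (n r : ℕ) (hn : 0 < n) (hr : 0 < r)
    (V : Matrix (Fin n) (Fin n) ℂ) (U : Matrix (Fin n) (Fin r) ℂ)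
    (P : Matrix (Fin n) (Fin n) ℂ)
    (hPU : P = U * Uᴴ) (hP : P.PosSemidef) (htr : P.trace = n) (hrank : P.rank = r) :
    Real.exp (-(n : ℝ) * ((harmonic (r - 1) : ℝ) - Real.log r)) *
        ∏ i, (star (fun j => V j i) ⬝ᵥ P.mulVec (fun j => V j i)).re ≤
      ∫ z, ∏ i, ‖star (fun j => V j i) ⬝ᵥ
            ((Real.sqrt n / Real.sqrt (∑ j, ‖U.mulVec z j‖ ^ 2)) • U.mulVec z)‖ ^ 2
        ∂(stdCGaussianVec r) := by
  subst hPU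
  simpa only [Fintype.card_fin, stdCGaussianVec, rescale] using
    stmt13_general (fun i j => V j i) U (Nat.cast_pos.2 hn) (mod_cast htr)
end

section
/- Let A = V†V be an n×n Hermitian positive semidefinite complex matrix with columns v_i of V, and let x ~ 𝒞𝒩(0, I_n) be a standard circularly-symmetric complex Gaussian vector. Then per(A) = E_x[∏_{i=1}^n |⟨v_i, x⟩|²]. -/
open MeasureTheory ProbabilityTheory Matrix Finset

/-- The permanent of a square matrix. -/
noncomputable def perm {ι : Type*} [Fintype ι] [DecidableEq ι]
    (A : Matrix ι ι ℂ) : ℂ :=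
  ∑ σ : Equiv.Perm ι, ∏ i, A i (σ i)

/-!
Both sides are expanded over maps `f g : ι → κ` that select one coordinate from each factor.
Expanding the permanent of a product of matrices by multilinearity leaves the permanents of the
`0/1` matrices `δ_{f i, g k}`. Each of these counts the permutations `σ` with `f ∘ σ = g`, which
exist only if `f` and `g` have fibres of equal sizes `mⱼ`, and then number `∏ⱼ mⱼ!`. Expanding the
integrand leaves the moments of the monomials `∏ᵢ x_{f i} conj x_{g i}`. These factor over the
coordinates and give the same product, because `E[z ^ a * conj z ^ b]` vanishes by rotation
invariance for `a ≠ b`, and equals `∫₀^∞ tᵃ e⁻ᵗ dt = a!` for `a = b`.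
-/

open scoped ComplexConjugate ENNReal NNReal Nat

section Permanent

variable {ι κ R : Type*} [Fintype ι] [DecidableEq ι] [Fintype κ] [CommSemiring R]

lemma perm_eq_permanent (A : Matrix ι ι ℂ) : perm A = A.permanent :=
  permanent_transpose A

lemma permanent_mul_expand_right (A : Matrix ι κ R) (B : Matrix κ ι R) :
    (A * B).permanent = ∑ g : ι → κ, (∏ i, B (g i) i) * (A.submatrix id g).permanent := by
  simp only [permanent, mul_apply, Fintype.prod_sum, prod_mul_distrib, submatrix_apply, id_eq,
    mul_sum]
  rw [sum_comm]
  simp only [mul_comm]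

lemma permanent_mul_expand_left (A : Matrix ι κ R) (B : Matrix κ ι R) :
    (A * B).permanent = ∑ f : ι → κ, (∏ i, A i (f i)) * (B.submatrix f id).permanent := by
  rw [← permanent_transpose, transpose_mul, permanent_mul_expand_right]
  simp only [transpose_apply, ← transpose_submatrix, permanent_transpose]

lemma permanent_mul_expand [DecidableEq κ] (A : Matrix ι κ R) (B : Matrix κ ι R) :
    (A * B).permanent = ∑ f : ι → κ, ∑ g : ι → κ,
      (∏ i, A i (f i) * B (g i) i) * ((1 : Matrix κ κ R).submatrix f g).permanent := by
  rw [permanent_mul_expand_left]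
  refine sum_congr rfl fun f _ => ?_
  have hB : B.submatrix f id = (1 : Matrix κ κ R).submatrix f id * B := by
    simpa only [Matrix.one_mul, submatrix_id_id] using
      submatrix_mul 1 B f id id Function.bijective_id
  rw [hB, permanent_mul_expand_right, mul_sum]
  simp only [submatrix_submatrix, Function.comp_id, Function.id_comp, prod_mul_distrib, mul_assoc]

end Permanent

section PermutationCount

variable {ι κ : Type*} [Fintype ι] [DecidableEq κ]

lemma exists_perm_comp_eq_iff {f g : ι → κ} :
    (∃ σ : Equiv.Perm ι, f ∘ σ = g) ↔ ∀ j, #{i | f i = j} = #{i | g i = j} := by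
  constructor
  · rintro ⟨σ, rfl⟩ j
    exact (card_equiv σ (by simp)).symm
  · intro h
    have e (j : κ) : Nonempty ({i // g i = j} ≃ {i // f i = j}) :=
      ⟨Fintype.equivOfCardEq (by simp only [Fintype.card_subtype, h])⟩
    exact ⟨Equiv.ofFiberEquiv fun j => (e j).some, funext (Equiv.ofFiberEquiv_map _)⟩

lemma prod_comp_eq_prod_pow_card_fiber [Fintype κ] {M : Type*} [CommMonoid M]
    (f : ι → κ) (x : κ → M) :
    ∏ i, x (f i) = ∏ j, x j ^ #{i | f i = j} := by
  simp only [← prod_const, prod_fiberwise']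

variable [DecidableEq ι]

lemma permanent_one_submatrix {R : Type*} [CommSemiring R] (f g : ι → κ) :
    ((1 : Matrix κ κ R).submatrix f g).permanent = #{σ : Equiv.Perm ι | f ∘ σ = g} := by
  simp only [permanent, submatrix_apply, one_apply, prod_ite_zero, prod_const_one, mem_univ,
    true_imp_iff, funext_iff, Function.comp_apply, sum_boole]

lemma card_perm_comp_comp_eq (f : ι → κ) (τ : Equiv.Perm ι) :
    #{σ : Equiv.Perm ι | f ∘ σ = f ∘ τ} = #{σ : Equiv.Perm ι | f ∘ σ = f} := by
  refine card_equiv (Equiv.mulRight τ⁻¹) fun σ => ?_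
  simp only [mem_filter_univ, Equiv.coe_mulRight, Equiv.Perm.coe_mul, ← Function.comp_assoc]
  exact (Equiv.comp_symm_eq τ f (f ∘ σ)).symm

lemma card_perm_comp_eq [Fintype κ] (f g : ι → κ) :
    #{σ : Equiv.Perm ι | f ∘ σ = g} =
      ∏ j, if #{i | f i = j} = #{i | g i = j} then (#{i | f i = j})! else 0 := by
  by_cases h : ∀ j, #{i | f i = j} = #{i | g i = j}
  · obtain ⟨τ, rfl⟩ := exists_perm_comp_eq_iff.2 h
    rw [card_perm_comp_comp_eq, ← Fintype.card_subtype, DomMulAct.stabilizer_card]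
    simp only [Fintype.card_subtype, h, if_true]
  · have hempty : #{σ : Equiv.Perm ι | f ∘ σ = g} = 0 :=
      card_filter_eq_zero_iff.2 fun σ _ hσ => h (exists_perm_comp_eq_iff.1 ⟨σ, hσ⟩)
    obtain ⟨j, hj⟩ := not_forall.1 h
    rw [hempty, prod_eq_zero (mem_univ j) (if_neg hj)]

end PermutationCount

section StdCGaussian

instance isProbabilityMeasure_stdCGaussian : IsProbabilityMeasure stdCGaussian :=
  Measure.isProbabilityMeasure_map (by fun_prop)

lemma measurePreserving_withDensity_comp {α β : Type*} [MeasurableSpace α] [MeasurableSpace β]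
    {μ : Measure α} {ν : Measure β} {T : α → β} (hT : MeasurePreserving T μ ν) {ρ : β → ℝ≥0∞}
    (hρ : Measurable ρ) :
    MeasurePreserving T (μ.withDensity fun a => ρ (T a)) (ν.withDensity ρ) := by
  refine ⟨hT.measurable, Measure.ext fun s hs => ?_⟩
  rw [Measure.map_apply hT.measurable hs, withDensity_apply _ (hT.measurable hs),
    withDensity_apply _ hs, hT.setLIntegral_comp_preimage hs hρ]

/-- The density `π⁻¹ exp (-|z|²)` of `stdCGaussian` with respect to Lebesgue measure on `ℂ`. -/
noncomputable def stdCGaussianPDFReal (z : ℂ) : ℝ :=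
  Real.pi⁻¹ * Real.exp (-‖z‖ ^ 2)

lemma stdCGaussianPDFReal_nonneg (z : ℂ) : 0 ≤ stdCGaussianPDFReal z := by
  unfold stdCGaussianPDFReal
  positivity

@[fun_prop]
lemma measurable_stdCGaussianPDFReal : Measurable stdCGaussianPDFReal := by
  unfold stdCGaussianPDFReal
  fun_prop

lemma gaussianPDFReal_zero_mul_gaussianPDFReal_zero (v : ℝ≥0) (x y : ℝ) :
    gaussianPDFReal 0 v x * gaussianPDFReal 0 v y =
      (2 * Real.pi * v)⁻¹ * Real.exp (-(x ^ 2 + y ^ 2) / (2 * v)) := by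
  simp only [gaussianPDFReal, sub_zero]
  rw [mul_mul_mul_comm, ← mul_inv, Real.mul_self_sqrt (by positivity), ← Real.exp_add]
  ring_nf

lemma gaussianPDFReal_mul_gaussianPDFReal_eq_stdCGaussianPDFReal (p : ℝ × ℝ) :
    gaussianPDFReal 0 (1 / 2) p.1 * gaussianPDFReal 0 (1 / 2) p.2 =
      stdCGaussianPDFReal (Complex.measurableEquivRealProd.symm p) := by
  have hnorm : ‖Complex.measurableEquivRealProd.symm p‖ ^ 2 = p.1 ^ 2 + p.2 ^ 2 := by
    rw [Complex.sq_norm, Complex.normSq_apply, Complex.measurableEquivRealProd_symm_apply]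
    ring
  rw [gaussianPDFReal_zero_mul_gaussianPDFReal_zero, stdCGaussianPDFReal, hnorm]
  norm_num [mul_left_comm]

lemma stdCGaussian_eq_withDensity :
    stdCGaussian = volume.withDensity fun z => ENNReal.ofReal (stdCGaussianPDFReal z) := by
  have hmap : (fun p : ℝ × ℝ => (p.1 : ℂ) + p.2 * Complex.I) =
      Complex.measurableEquivRealProd.symm :=
    funext fun p => (Complex.mk_eq_add_mul_I p.1 p.2).symm
  rw [← (measurePreserving_withDensity_comp
      (Complex.volume_preserving_equiv_real_prod.symm Complex.measurableEquivRealProd)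
      (by fun_prop)).map_eq,
    stdCGaussian, hmap, gaussianReal_of_var_ne_zero _ (by norm_num),
    prod_withDensity (measurable_gaussianPDF _ _) (measurable_gaussianPDF _ _)]
  simp only [gaussianPDF, ← ENNReal.ofReal_mul (gaussianPDFReal_nonneg _ _ _),
    gaussianPDFReal_mul_gaussianPDFReal_eq_stdCGaussianPDFReal]
  rfl

lemma integral_stdCGaussian {E : Type*} [NormedAddCommGroup E] [NormedSpace ℝ E] (F : ℂ → E) :
    ∫ z, F z ∂stdCGaussian = ∫ z, stdCGaussianPDFReal z • F z := by
  rw [stdCGaussian_eq_withDensity,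
    integral_withDensity_eq_integral_toReal_smul (by fun_prop) (by simp)]
  simp only [ENNReal.toReal_ofReal (stdCGaussianPDFReal_nonneg _)]

lemma measurePreserving_linearIsometryEquiv_stdCGaussian (e : ℂ ≃ₗᵢ[ℝ] ℂ) :
    MeasurePreserving e stdCGaussian stdCGaussian := by
  rw [stdCGaussian_eq_withDensity]
  have h := measurePreserving_withDensity_comp e.measurePreserving
    (ρ := fun z => ENNReal.ofReal (stdCGaussianPDFReal z)) (by fun_prop)
  simpa only [stdCGaussianPDFReal, e.norm_map] using h

lemma integral_norm_pow_stdCGaussian (k : ℕ) :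
    ∫ z, ‖z‖ ^ k ∂stdCGaussian = Real.Gamma (k / 2 + 1) := by
  have hGamma := Complex.integral_rpow_mul_exp_neg_rpow (p := 2) (q := k) one_le_two
    ((neg_lt_zero.2 two_pos).trans_le k.cast_nonneg)
  simp only [Real.rpow_natCast, Real.rpow_two] at hGamma
  calc ∫ z, ‖z‖ ^ k ∂stdCGaussian
      = Real.pi⁻¹ * ∫ z : ℂ, ‖z‖ ^ k * Real.exp (-‖z‖ ^ 2) := by
        rw [integral_stdCGaussian, ← integral_const_mul]
        simp only [stdCGaussianPDFReal, smul_eq_mul]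
        ring_nf
    _ = Real.Gamma (k / 2 + 1) := by
        rw [hGamma, add_div, div_self two_ne_zero]
        field_simp

lemma integrable_norm_pow_stdCGaussian (k : ℕ) :
    Integrable (fun z => ‖z‖ ^ k) stdCGaussian := by
  refine .of_integral_ne_zero ?_
  rw [integral_norm_pow_stdCGaussian]
  exact (Real.Gamma_pos_of_pos (by positivity)).ne'

lemma integrable_pow_mul_conj_pow_stdCGaussian (a b : ℕ) :
    Integrable (fun z => z ^ a * conj z ^ b) stdCGaussian := by
  have hcont : Continuous fun z : ℂ => z ^ a * conj z ^ b := by fun_prop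
  refine (integrable_norm_pow_stdCGaussian (a + b)).mono' hcont.aestronglyMeasurable
    (.of_forall fun z => ?_)
  rw [norm_mul, norm_pow, norm_pow, RCLike.norm_conj, pow_add]

lemma integral_pow_mul_conj_pow_self_stdCGaussian (a : ℕ) :
    ∫ z, z ^ a * conj z ^ a ∂stdCGaussian = a ! := by
  have hnorm (z : ℂ) : z ^ a * conj z ^ a = ((‖z‖ ^ (2 * a) : ℝ) : ℂ) := by
    rw [← mul_pow, Complex.mul_conj', pow_mul]
    norm_cast
  simp only [hnorm]
  rw [integral_complex_ofReal, integral_norm_pow_stdCGaussian, Nat.cast_mul, Nat.cast_two,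
    mul_div_cancel_left₀ _ two_ne_zero, Real.Gamma_nat_eq_factorial, Complex.ofReal_natCast]

lemma exists_circle_pow_mul_conj_pow_ne_one {a b : ℕ} (hab : a ≠ b) :
    ∃ c : Circle, (c : ℂ) ^ a * conj (c : ℂ) ^ b ≠ 1 := by
  have hsub : (a : ℝ) - b ≠ 0 := sub_ne_zero.2 (Nat.cast_injective.ne hab)
  let c := Circle.exp (Real.pi / (a - b))
  have hc : c ^ a * c⁻¹ ^ b = Circle.exp Real.pi := by
    rw [inv_pow, ← div_eq_mul_inv, ← Circle.exp_natCast_mul, ← Circle.exp_natCast_mul,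
      ← Circle.exp_sub, ← sub_mul, mul_div_cancel₀ _ hsub]
  refine ⟨c, fun h => Circle.exp_pi_ne_one ?_⟩
  rw [← hc, ← Circle.coe_eq_one, Circle.coe_mul, Circle.coe_pow, Circle.coe_pow,
    Circle.coe_inv_eq_conj, h]

lemma integral_pow_mul_conj_pow_stdCGaussian_of_ne {a b : ℕ} (hab : a ≠ b) :
    ∫ z, z ^ a * conj z ^ b ∂stdCGaussian = 0 := by
  obtain ⟨c, hc⟩ := exists_circle_pow_mul_conj_pow_ne_one hab
  have hinv : ∫ z, z ^ a * conj z ^ b ∂stdCGaussian =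
      (c : ℂ) ^ a * conj (c : ℂ) ^ b * ∫ z, z ^ a * conj z ^ b ∂stdCGaussian := by
    calc ∫ z, z ^ a * conj z ^ b ∂stdCGaussian
        = ∫ z, rotation c z ^ a * conj (rotation c z) ^ b ∂stdCGaussian :=
          ((measurePreserving_linearIsometryEquiv_stdCGaussian (rotation c)).integral_comp
            (rotation c).toHomeomorph.measurableEmbedding _).symm
      _ = (c : ℂ) ^ a * conj (c : ℂ) ^ b * ∫ z, z ^ a * conj z ^ b ∂stdCGaussian := by
          rw [← integral_const_mul]
          congr with z
          rw [rotation_apply, map_mul]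
          ring
  by_contra h
  exact hc ((mul_eq_right₀ h).1 hinv.symm)

lemma integral_pow_mul_conj_pow_stdCGaussian (a b : ℕ) :
    ∫ z, z ^ a * conj z ^ b ∂stdCGaussian = if a = b then (a ! : ℂ) else 0 := by
  split_ifs with h
  · rw [← h, integral_pow_mul_conj_pow_self_stdCGaussian]
  · exact integral_pow_mul_conj_pow_stdCGaussian_of_ne h

end StdCGaussian

section Wick

variable {ι κ : Type*} [Fintype ι] [Fintype κ]

lemma prod_mul_conj_eq_prod_pow_card_fiber [DecidableEq κ] {R : Type*} [CommSemiring R]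
    [StarRing R] (f g : ι → κ) (x : κ → R) :
    ∏ i, x (f i) * conj (x (g i)) = ∏ j, x j ^ #{i | f i = j} * conj (x j) ^ #{i | g i = j} := by
  rw [prod_mul_distrib, prod_comp_eq_prod_pow_card_fiber f,
    prod_comp_eq_prod_pow_card_fiber g fun j => conj (x j), prod_mul_distrib]

lemma integrable_prod_mul_conj_pi_stdCGaussian (f g : ι → κ) :
    Integrable (fun x => ∏ i, x (f i) * conj (x (g i)))
      (Measure.pi fun _ : κ => stdCGaussian) := by
  classical
  simp only [prod_mul_conj_eq_prod_pow_card_fiber]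
  exact Integrable.fintype_prod (f := fun j z => z ^ #{i | f i = j} * conj z ^ #{i | g i = j})
    fun _ => integrable_pow_mul_conj_pow_stdCGaussian _ _

variable [DecidableEq ι]

lemma integral_prod_mul_conj_pi_stdCGaussian [DecidableEq κ] (f g : ι → κ) :
    ∫ x, ∏ i, x (f i) * conj (x (g i)) ∂(Measure.pi fun _ : κ => stdCGaussian) =
      ((1 : Matrix κ κ ℂ).submatrix f g).permanent := by
  simp only [prod_mul_conj_eq_prod_pow_card_fiber]
  rw [integral_fintype_prod_eq_prod
      fun j z => z ^ #{i | f i = j} * conj z ^ #{i | g i = j},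
    permanent_one_submatrix, card_perm_comp_eq]
  simp only [integral_pow_mul_conj_pow_stdCGaussian, Nat.cast_prod, Nat.cast_ite, Nat.cast_zero]

lemma prod_mulVec_mul_star_vecMul {R : Type*} [CommSemiring R] [StarRing R]
    (A : Matrix ι κ R) (B : Matrix κ ι R) (x : κ → R) :
    ∏ i, (A *ᵥ x) i * (star x ᵥ* B) i = ∑ f : ι → κ, ∑ g : ι → κ,
      (∏ i, A i (f i) * B (g i) i) * ∏ i, x (f i) * conj (x (g i)) := by
  simp only [prod_mul_distrib, mulVec, vecMul, dotProduct, Fintype.prod_sum, sum_mul_sum,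
    Pi.star_apply, starRingEnd_apply]
  refine sum_congr rfl fun f _ => sum_congr rfl fun g _ => ?_
  ring

theorem integral_prod_mulVec_mul_star_vecMul_pi_stdCGaussian
    (A : Matrix ι κ ℂ) (B : Matrix κ ι ℂ) :
    ∫ x, ∏ i, (A *ᵥ x) i * (star x ᵥ* B) i ∂(Measure.pi fun _ : κ => stdCGaussian) =
      (A * B).permanent := by
  classical
  have hint (f g : ι → κ) := (integrable_prod_mul_conj_pi_stdCGaussian f g).const_mul
    (∏ i, A i (f i) * B (g i) i)
  simp only [prod_mulVec_mul_star_vecMul]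
  rw [integral_finsetSum _ fun f _ => integrable_finsetSum _ fun g _ => hint f g]
  simp only [integral_finsetSum _ fun g _ => hint _ g, integral_const_mul,
    integral_prod_mul_conj_pi_stdCGaussian, permanent_mul_expand]

theorem stmt14_general (V : Matrix κ ι ℂ) :
    perm (Vᴴ * V) =
      ((∫ x, ∏ i, ‖star (fun j => V j i) ⬝ᵥ x‖ ^ 2
        ∂(Measure.pi fun _ : κ => stdCGaussian) : ℝ) : ℂ) := by
  have hnorm (x : κ → ℂ) : ((∏ i, ‖star (fun j => V j i) ⬝ᵥ x‖ ^ 2 : ℝ) : ℂ) =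
      ∏ i, (Vᴴ *ᵥ x) i * (star x ᵥ* V) i := by
    push_cast
    refine prod_congr rfl fun i _ => ?_
    have hstar : star x ᵥ* V = star (Vᴴ *ᵥ x) := by
      rw [star_mulVec, conjTranspose_conjTranspose]
    rw [← Complex.mul_conj', hstar]
    rfl
  rw [perm_eq_permanent, ← integral_complex_ofReal]
  simp only [hnorm, integral_prod_mulVec_mul_star_vecMul_pi_stdCGaussian]

end Wick

/-- Gaussian integral representation of the permanent of an HPSD matrix `A = Vᴴ V`:
`per A = E_x[∏ᵢ |⟨vᵢ, x⟩|²]` for `x ~ 𝒞𝒩(0, I_n)`, where `vᵢ` are the columns of `V`. -/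
theorem stmt14 (n : ℕ) (V : Matrix (Fin n) (Fin n) ℂ) :
    perm (Vᴴ * V) =
      ((∫ x, ∏ i, ‖star (fun j => V j i) ⬝ᵥ x‖ ^ 2 ∂(stdCGaussianVec n) : ℝ) : ℂ) :=
  stmt14_general V
end
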